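/- The trace of K*K equals 1 if and only if the boundary curve is a circle: (1/π²) ∫₀^L ∫₀^L k(s,t)² dt ds = 1 holds if and only if there exist a point c ∈ ℝ² and a radius R > 0 such that ‖q(s) − c‖ = R for all s ∈ ℝ. -/

import Mathlib

open Real Filter Topology MeasureTheory intervalIntegral

/-- The two-dimensional double layer kernel
`k(s,t) = ⟨q(s) − q(t), n(t)⟩ / ‖q(s) − q(t)‖²` with outward unit normal
`n(t) = (q'(t)₂, −q'(t)₁)`, written out in coordinates. -/
noncomputable def dlKernel (q : ℝ → EuclideanSpace ℝ (Fin 2)) (s t : ℝ) : ℝ :=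
  ((q s 0 - q t 0) * deriv q t 1 - (q s 1 - q t 1) * deriv q t 0) / ‖q s - q t‖ ^ 2

/-- The diagonal value `(1/2)·⟨q''(t), n(t)⟩ = −κ(t)/2` of the continuously
extended double layer kernel. -/
noncomputable def dlDiag (q : ℝ → EuclideanSpace ℝ (Fin 2)) (t : ℝ) : ℝ :=
  (1 / 2) * (deriv (deriv q) t 0 * deriv q t 1 - deriv (deriv q) t 1 * deriv q t 0)

/-!
Writing the curve as `z : ℝ → ℂ`, the kernel is `k(s, t) = -∂ₜ arg (z t - z s)`, so that
`k(s, s + h) + k(s + h, s)` is minus the `s`-derivative of the argument of the secant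
`z (s + h) - z s`. For `0 < h < L` the secant never vanishes, and the integral over one period is a
multiple of `2π`. It depends continuously on `h`, hence keeps its value `2 ∫ k(t, t) dt` at `h = 0`,
and integrating over `h` gives `∫∫ k = L ∫ k(t, t) dt`.

By Cauchy–Schwarz, `∫∫ k² ≥ (∫ k(t, t) dt)²`, which is `π²` by the orientation, with equality only
if `k` is constant. If `k(·, t)` is constant, then `‖z t - z s‖²` is a fixed multiple of the
component of the chord `z t - z s` normal to the curve at `z t`, which is the equation of a circle
through `z t`. Conversely `Re (a / (a - b)) = 1 / 2` whenever `‖a‖ = ‖b‖` and `a ≠ b`, which makes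
`k` constant on a circle.
-/

section IteratedIntegrals

variable {E : Type*} [NormedAddCommGroup E] {f : ℝ → ℝ → E} {a b c d T : ℝ}

theorem integrableOn_uIoc_prod_uIoc (hf : Continuous f.uncurry) :
    IntegrableOn f.uncurry (Set.uIoc a b ×ˢ Set.uIoc c d) :=
  (hf.continuousOn.integrableOn_compact (isCompact_uIcc.prod isCompact_uIcc)).mono_set
    (Set.prod_mono Set.uIoc_subset_uIcc Set.uIoc_subset_uIcc)

variable [NormedSpace ℝ E]

theorem intervalIntegral_intervalIntegral_swap_of_continuous (hf : Continuous f.uncurry) :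
    ∫ s in a..b, ∫ t in c..d, f s t = ∫ t in c..d, ∫ s in a..b, f s t :=
  intervalIntegral_intervalIntegral_swap (integrableOn_uIoc_prod_uIoc hf)

theorem integral_integral_shear (hf : Continuous f.uncurry)
    (hper : ∀ s, Function.Periodic (f s) T) :
    ∫ h in (0 : ℝ)..T, ∫ s in a..b, f s (s + h) = ∫ s in a..b, ∫ t in (0 : ℝ)..T, f s t := by
  have hshear : Continuous (fun h s => f s (s + h)).uncurry :=
    hf.comp (continuous_snd.prodMk (continuous_snd.add continuous_fst))
  rw [intervalIntegral_intervalIntegral_swap_of_continuous hshear]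
  congr! 2 with s
  rw [intervalIntegral.integral_comp_add_left (f s) s, add_zero,
    (hper s).intervalIntegral_add_eq s 0, zero_add]

theorem intervalIntegral_intervalIntegral_add {g : ℝ → ℝ → E} (hf : Continuous f.uncurry)
    (hg : Continuous g.uncurry) :
    ∫ s in a..b, ∫ t in c..d, (f s t + g s t) =
      (∫ s in a..b, ∫ t in c..d, f s t) + ∫ s in a..b, ∫ t in c..d, g s t := by
  have hinner : ∀ s, ∫ t in c..d, (f s t + g s t) =
      (∫ t in c..d, f s t) + ∫ t in c..d, g s t := fun s =>
    intervalIntegral.integral_add ((hf.uncurry_left s).intervalIntegrable _ _)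
      ((hg.uncurry_left s).intervalIntegrable _ _)
  simp only [hinner]
  exact intervalIntegral.integral_add
    ((continuous_parametric_intervalIntegral_of_continuous' hf c d).intervalIntegrable a b)
    ((continuous_parametric_intervalIntegral_of_continuous' hg c d).intervalIntegrable a b)

end IteratedIntegrals

section CauchySchwarz

variable {f : ℝ → ℝ → ℝ} {a b c d : ℝ}

theorem eq_zero_of_integral_integral_eq_zero (hf : Continuous f.uncurry)
    (hnonneg : ∀ s t, 0 ≤ f s t) (hab : a < b) (hcd : c < d)
    (hzero : ∫ s in a..b, ∫ t in c..d, f s t = 0)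
    {s t : ℝ} (hs : s ∈ Set.Icc a b) (ht : t ∈ Set.Icc c d) : f s t = 0 := by
  by_contra hne
  have hinner : 0 < ∫ t in c..d, f s t :=
    intervalIntegral.integral_pos hcd (hf.uncurry_left s).continuousOn (fun t _ => hnonneg s t)
      ⟨t, ht, (hnonneg s t).lt_of_ne' hne⟩
  exact hzero.not_gt <| intervalIntegral.integral_pos hab
    (continuous_parametric_intervalIntegral_of_continuous' hf c d).continuousOn
    (fun s _ => intervalIntegral.integral_nonneg hcd.le fun t _ => hnonneg s t) ⟨s, hs, hinner⟩

theorem integral_integral_sub_const_sq (hf : Continuous f.uncurry) (m : ℝ) :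
    ∫ s in a..b, ∫ t in c..d, (f s t - m) ^ 2 =
      (∫ s in a..b, ∫ t in c..d, f s t ^ 2) - 2 * m * (∫ s in a..b, ∫ t in c..d, f s t) +
        (b - a) * (d - c) * m ^ 2 := by
  have hexpand : ∀ s t, (f s t - m) ^ 2 = f s t ^ 2 + (-(2 * m) * f s t + m ^ 2) := by
    intro s t
    ring
  have hsq : Continuous (fun s t => f s t ^ 2).uncurry := hf.pow 2
  have hlin : Continuous (fun s t => -(2 * m) * f s t).uncurry := continuous_const.mul hf
  have hconst : Continuous (fun _ _ : ℝ => m ^ 2).uncurry := continuous_const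
  have haffine : Continuous (fun s t => -(2 * m) * f s t + m ^ 2).uncurry := hlin.add hconst
  simp only [hexpand]
  rw [intervalIntegral_intervalIntegral_add hsq haffine,
    intervalIntegral_intervalIntegral_add hlin hconst]
  simp only [intervalIntegral.integral_const_mul, intervalIntegral.integral_const, smul_eq_mul]
  ring

theorem eq_average_of_sq_integral_eq (hf : Continuous f.uncurry) (hab : a < b) (hcd : c < d)
    (heq : (∫ s in a..b, ∫ t in c..d, f s t) ^ 2 =
      (b - a) * (d - c) * ∫ s in a..b, ∫ t in c..d, f s t ^ 2)
    {s t : ℝ} (hs : s ∈ Set.Icc a b) (ht : t ∈ Set.Icc c d) :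
    f s t = (∫ s in a..b, ∫ t in c..d, f s t) / ((b - a) * (d - c)) := by
  set m := (∫ s in a..b, ∫ t in c..d, f s t) / ((b - a) * (d - c)) with hm
  have hba : b - a ≠ 0 := (sub_pos.2 hab).ne'
  have hdc : d - c ≠ 0 := (sub_pos.2 hcd).ne'
  have hvariance : ∫ s in a..b, ∫ t in c..d, (f s t - m) ^ 2 = 0 := by
    rw [integral_integral_sub_const_sq hf, hm]
    field_simp
    linear_combination -heq
  have hcont : Continuous (fun s t => (f s t - m) ^ 2).uncurry := (hf.sub continuous_const).pow 2
  have hsq := eq_zero_of_integral_integral_eq_zero hcont (fun s t => sq_nonneg _) hab hcd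
    hvariance hs ht
  exact sub_eq_zero.1 (pow_eq_zero_iff two_ne_zero |>.1 hsq)

end CauchySchwarz

section Curves

theorem exists_const_of_sq_eq {X : Type*} [TopologicalSpace X] [PreconnectedSpace X] {f : X → ℝ}
    (hf : Continuous f) {r : ℝ} (hsq : ∀ x, f x ^ 2 = r ^ 2) : ∃ m, ∀ x, f x = m := by
  have hmaps : Set.MapsTo f Set.univ {r, -r} := fun x _ => sq_eq_sq_iff_eq_or_eq_neg.1 (hsq x)
  obtain ⟨m, -, hm⟩ := isPreconnected_univ.eqOn_const_of_mapsTo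
    (Set.toFinite {r, -r}).isDiscrete hf.continuousOn hmaps ⟨r, by simp⟩
  exact ⟨m, fun x => hm (Set.mem_univ x)⟩

theorem dense_setOf_ne_of_deriv_ne_zero {F : Type*} [NormedAddCommGroup F] [NormedSpace ℝ F]
    {γ : ℝ → F} (hγ : ∀ t, deriv γ t ≠ 0) (p : F) : Dense {t | γ t ≠ p} := fun t =>
  mem_closure_of_frequently_of_tendsto
    ((differentiableAt_of_deriv_ne_zero (hγ t)).hasDerivAt.eventually_ne (hγ t)).frequently
    (tendsto_id.mono_left nhdsWithin_le_nhds)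

theorem ne_add_of_periodic_of_injOn_Ico {α : Type*} {γ : ℝ → α} {L h : ℝ}
    (hper : Function.Periodic γ L) (hinj : Set.InjOn γ (Set.Ico 0 L)) (hh : h ∈ Set.Ioo 0 L)
    (s : ℝ) : γ s ≠ γ (s + h) := by
  intro heq
  have hL : 0 < L := hh.1.trans hh.2
  have hmod : ∀ t, γ (toIcoMod hL 0 t) = γ t := fun t => hper.sub_zsmul_eq _
  have hmem : ∀ t, toIcoMod hL 0 t ∈ Set.Ico 0 L := fun t => by
    simpa using toIcoMod_mem_Ico hL 0 t
  have hmodEq : s ≡ s + h [PMOD L] :=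
    (toIcoMod_inj hL).1 (hinj (hmem s) (hmem (s + h)) (by rw [hmod, hmod, heq]))
  have hself : toIcoMod hL s (s + h) = s + h :=
    (toIcoMod_eq_self hL).2 ⟨by linarith [hh.1], by linarith [hh.2]⟩
  linarith [hh.1, (AddCommGroup.modEq_iff_toIcoMod_eq_left hL).1 hmodEq]

theorem exists_integral_logDeriv_eq {γ : ℝ → ℂ} {a b : ℝ} (hγ : ContDiff ℝ 1 γ)
    (hne : ∀ t, γ t ≠ 0) (hclosed : γ a = γ b) :
    ∃ n : ℤ, ∫ t in a..b, logDeriv γ t = n * (2 * π * Complex.I) := by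
  have hcont : Continuous (logDeriv γ) := (hγ.continuous_deriv le_rfl).div hγ.continuous hne
  set log : ℝ → ℂ := fun s => ∫ t in a..s, logDeriv γ t
  have hlog : ∀ t, HasDerivAt log (logDeriv γ t) t := fun t =>
    hcont.integral_hasStrictDerivAt a t |>.hasDerivAt
  have hderiv : ∀ t, HasDerivAt (fun s => Complex.exp (-log s) * γ s) 0 t := fun t => by
    have hmul := (hlog t).neg.cexp.mul (hγ.differentiable one_ne_zero t).hasDerivAt
    have hzero : Complex.exp (-log t) * -logDeriv γ t * γ t +
        Complex.exp (-log t) * deriv γ t = 0 := by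
      rw [logDeriv_apply]
      field_simp [hne t]
      ring
    exact hzero ▸ hmul
  have hconst : Complex.exp (-log b) * γ b = Complex.exp (-log a) * γ a :=
    is_const_of_deriv_eq_zero (fun t => (hderiv t).differentiableAt) (fun t => (hderiv t).deriv) b a
  have hexp : Complex.exp (log b) = 1 := by
    have hlog_a : log a = 0 := intervalIntegral.integral_same
    rw [hlog_a, hclosed, neg_zero, Complex.exp_zero] at hconst
    rw [← inv_eq_one, ← Complex.exp_neg]
    exact mul_right_cancel₀ (hne b) hconst
  exact Complex.exp_eq_one_iff.1 hexp

theorem integral_im_logDeriv_mem_zmultiples {γ : ℝ → ℂ} {a b : ℝ} (hγ : ContDiff ℝ 1 γ)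
    (hne : ∀ t, γ t ≠ 0) (hclosed : γ a = γ b) :
    ∫ t in a..b, (logDeriv γ t).im ∈ AddSubgroup.zmultiples (2 * π) := by
  have hcont : Continuous (logDeriv γ) := (hγ.continuous_deriv le_rfl).div hγ.continuous hne
  obtain ⟨n, hn⟩ := exists_integral_logDeriv_eq hγ hne hclosed
  have him : ∫ t in a..b, (logDeriv γ t).im = (∫ t in a..b, logDeriv γ t).im :=
    Complex.imCLM.intervalIntegral_comp_comm (hcont.intervalIntegrable a b)
  exact ⟨n, by simp [him, hn]⟩

end Curves

section Circles

open scoped ComplexConjugate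

theorem norm_sub_I_mul_div_eq {u w : ℂ} {κ : ℝ} (hu : ‖u‖ = 1) (hκ : κ ≠ 0)
    (hw : (u * conj w).im = -κ * ‖w‖ ^ 2) :
    ‖w - Complex.I * u / (2 * κ)‖ = 1 / (2 * |κ|) := by
  have hcross : (w * conj (Complex.I * u / (2 * κ))).re = ‖w‖ ^ 2 / 2 := by
    have hconj : w * conj (Complex.I * u / (2 * κ)) =
        ((2 * κ)⁻¹ : ℝ) * (-Complex.I * conj (u * conj w)) := by
      simp only [map_mul, map_div₀, Complex.conj_I, Complex.conj_ofReal, Complex.conj_conj,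
        map_ofNat]
      push_cast
      ring
    rw [hconj, Complex.re_ofReal_mul, neg_mul, Complex.neg_re, Complex.I_mul_re, Complex.conj_im,
      hw]
    field_simp
  have hradius : ‖Complex.I * u / (2 * κ)‖ = 1 / (2 * |κ|) := by simp [hu]
  rw [← hradius, ← sq_eq_sq₀ (norm_nonneg _) (norm_nonneg _), ← Complex.normSq_eq_norm_sq,
    Complex.normSq_sub, hcross, Complex.normSq_eq_norm_sq, Complex.normSq_eq_norm_sq]
  ring

theorem exists_im_mul_conj_sub_ne_zero {z : ℝ → ℂ} (hz : Differentiable ℝ z)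
    (hz' : ∀ t, deriv z t ≠ 0) {a b : ℝ} (hab : a < b) (hclosed : z a = z b) {u : ℂ} (hu : u ≠ 0)
    (p : ℂ) : ∃ s, (u * conj (p - z s)).im ≠ 0 := by
  by_contra! hline
  set w := fun s => u * conj (p - z s) with hw
  have hderiv : ∀ s, HasDerivAt w (u * conj (-deriv z s)) s := fun s =>
    ((hz s).hasDerivAt.const_sub p).star.const_mul u
  have hre : ∀ s, HasDerivAt (fun s => (w s).re) (u * conj (-deriv z s)).re s := fun s =>
    Complex.reCLM.hasFDerivAt.comp_hasDerivAt s (hderiv s)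
  have him : ∀ s, (u * conj (-deriv z s)).im = 0 := fun s => by
    have h : HasDerivAt (fun s => (w s).im) (u * conj (-deriv z s)).im s :=
      Complex.imCLM.hasFDerivAt.comp_hasDerivAt s (hderiv s)
    rw [funext hline] at h
    exact h.unique (hasDerivAt_const s 0)
  obtain ⟨s, -, hs⟩ := exists_hasDerivAt_eq_zero hab
    (fun s _ => (hre s).continuousAt.continuousWithinAt) (by simp only [hw, hclosed])
    (fun s _ => hre s)
  have hzero : u * conj (-deriv z s) = 0 := Complex.ext hs (him s)
  exact hz' s (by simpa [hu] using hzero)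

theorem re_div_sub_eq_half {a b : ℂ} (hnorm : ‖a‖ = ‖b‖) (hne : a ≠ b) :
    (a / (a - b)).re = 1 / 2 := by
  have hpos : Complex.normSq (a - b) ≠ 0 := Complex.normSq_eq_zero.not.2 (sub_ne_zero.2 hne)
  have hchord : Complex.normSq (a - b) = 2 * (Complex.normSq a - (a * conj b).re) := by
    rw [Complex.normSq_sub, Complex.normSq_eq_norm_sq b, ← hnorm, Complex.normSq_eq_norm_sq]
    ring
  have hnum : (a * conj (a - b)).re = Complex.normSq a - (a * conj b).re := by
    rw [map_sub, mul_sub, Complex.sub_re, Complex.mul_conj, Complex.ofReal_re]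
  rw [div_eq_mul_inv, Complex.inv_def, ← mul_assoc, Complex.re_mul_ofReal, hnum,
    ← div_eq_mul_inv, div_eq_iff hpos, hchord]
  ring

theorem re_deriv_div_sub_eq_zero {z : ℝ → ℂ} (hz : Differentiable ℝ z) {c : ℂ} {R : ℝ}
    (hcircle : ∀ s, ‖z s - c‖ = R) (t : ℝ) : (deriv z t / (z t - c)).re = 0 := by
  have hderiv := ((hz t).hasDerivAt.sub_const c).norm_sq
  simp only [hcircle] at hderiv
  have hinner : inner ℝ (z t - c) (deriv z t) = 0 := by
    simpa using hderiv.unique (hasDerivAt_const t (R ^ 2))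
  rw [Complex.inner] at hinner
  rw [div_eq_mul_inv, Complex.inv_def, ← mul_assoc, Complex.re_mul_ofReal, hinner, zero_mul]

end Circles

/-- `k` is the double layer kernel of the curve `z`, extended continuously to the pairs of
parameters with the same image. For a unit-speed `z` the outward normal is `-i z'`, so
`⟨z s - z t, n t⟩ / ‖z s - z t‖ ^ 2` takes the form below: it is `-∂ₜ arg (z t - z s)`. -/
structure IsDoubleLayerKernel (z : ℝ → ℂ) (k : ℝ → ℝ → ℝ) : Prop where
  continuous : Continuous k.uncurry
  eq_of_ne : ∀ s t, z s ≠ z t → k s t = -(deriv z t / (z t - z s)).im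

namespace IsDoubleLayerKernel

open scoped ComplexConjugate

variable {z : ℝ → ℂ} {k : ℝ → ℝ → ℝ} {L : ℝ}

theorem ext_right (hk : IsDoubleLayerKernel z k) (hz : ∀ t, deriv z t ≠ 0) {s : ℝ}
    {f : ℝ → ℝ} (hf : Continuous f) (heq : ∀ t, z s ≠ z t → k s t = f t) (t : ℝ) : k s t = f t :=
  congrFun ((hk.continuous.uncurry_left s).ext_on (dense_setOf_ne_of_deriv_ne_zero hz (z s)) hf
    fun t ht => heq t (Ne.symm ht)) t

theorem periodic_right (hk : IsDoubleLayerKernel z k) (hz : ∀ t, deriv z t ≠ 0)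
    (hper : Function.Periodic z L) (s : ℝ) : Function.Periodic (k s) L := by
  have hshift : Continuous fun t => k s (t + L) :=
    (hk.continuous.uncurry_left s).comp (continuous_add_const L)
  refine fun t => (hk.ext_right hz hshift (fun t hne => ?_) t).symm
  have hderiv : deriv z (t + L) = deriv z t := by
    rw [← deriv_comp_add_const, hper.funext]
  rw [hk.eq_of_ne s t hne, hk.eq_of_ne s (t + L) (by rwa [hper t]), hper t, hderiv]

theorem periodic_left (hk : IsDoubleLayerKernel z k) (hz : ∀ t, deriv z t ≠ 0)
    (hper : Function.Periodic z L) (t : ℝ) : Function.Periodic (fun s => k s t) L := by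
  intro s
  refine hk.ext_right hz (hk.continuous.uncurry_left s) (fun t hne => ?_) t
  rw [hk.eq_of_ne s t (by rwa [← hper s]), hk.eq_of_ne (s + L) t hne, hper s]

theorem add_swap_eq_neg_im_logDeriv (hk : IsDoubleLayerKernel z k) (hz : Differentiable ℝ z)
    {s h : ℝ} (hne : z s ≠ z (s + h)) :
    k s (s + h) + k (s + h) s = -(logDeriv (fun s => z (s + h) - z s) s).im := by
  have hderiv : deriv (fun s => z (s + h) - z s) s = deriv z (s + h) - deriv z s := by
    rw [deriv_fun_sub (by fun_prop) (hz s), deriv_comp_add_const]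
  rw [hk.eq_of_ne _ _ hne, hk.eq_of_ne _ _ hne.symm, logDeriv_apply, hderiv, sub_div,
    ← neg_sub (z (s + h)), div_neg, Complex.sub_im, Complex.neg_im]
  ring

theorem continuous_integral_add_swap (hk : IsDoubleLayerKernel z k) :
    Continuous fun h => ∫ s in (0 : ℝ)..L, (k s (s + h) + k (s + h) s) := by
  have hdiag : Continuous fun p : ℝ × ℝ => p.2 + p.1 := by fun_prop
  exact continuous_parametric_intervalIntegral_of_continuous'
    ((hk.continuous.comp (continuous_snd.prodMk hdiag)).add
      (hk.continuous.comp (hdiag.prodMk continuous_snd))) 0 L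

theorem integral_add_swap_mem_zmultiples (hk : IsDoubleLayerKernel z k) (hz : ContDiff ℝ 1 z)
    (hper : Function.Periodic z L) {h : ℝ} (hne : ∀ s, z s ≠ z (s + h)) :
    ∫ s in (0 : ℝ)..L, (k s (s + h) + k (s + h) s) ∈ AddSubgroup.zmultiples (2 * π) := by
  have hsecant : ContDiff ℝ 1 fun s => z (s + h) - z s := by fun_prop
  have hclosed : z (0 + h) - z 0 = z (L + h) - z L := by
    rw [zero_add, add_comm L, hper, hper.eq]
  simp only [hk.add_swap_eq_neg_im_logDeriv (hz.differentiable one_ne_zero) (hne _),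
    intervalIntegral.integral_neg]
  exact neg_mem <| integral_im_logDeriv_mem_zmultiples hsecant
    (fun s => sub_ne_zero.2 (hne s).symm) hclosed

theorem integral_add_swap_eq (hk : IsDoubleLayerKernel z k) (hz : ContDiff ℝ 1 z)
    (hper : Function.Periodic z L) (hinj : Set.InjOn z (Set.Ico 0 L)) {h : ℝ}
    (hh : h ∈ Set.Ioo 0 L) :
    ∫ s in (0 : ℝ)..L, (k s (s + h) + k (s + h) s) = 2 * ∫ s in (0 : ℝ)..L, k s s := by
  set N := fun h => ∫ s in (0 : ℝ)..L, (k s (s + h) + k (s + h) s) with hN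
  have hcont : Continuous N := hk.continuous_integral_add_swap
  have hmaps : Set.MapsTo N (Set.Ioo 0 L) (AddSubgroup.zmultiples (2 * π)) := fun h hh =>
    hk.integral_add_swap_mem_zmultiples hz hper (ne_add_of_periodic_of_injOn_Ico hper hinj hh)
  have hdiscrete : IsDiscrete (AddSubgroup.zmultiples (2 * π) : Set ℝ) :=
    isDiscrete_iff_discreteTopology.2
      (inferInstanceAs (DiscreteTopology (AddSubgroup.zmultiples _)))
  have hconst : Set.EqOn N (fun _ => N h) (Set.Ioo 0 L) := fun h' hh' =>
    isPreconnected_Ioo.constant_of_mapsTo hdiscrete hcont.continuousOn hmaps hh' hh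
  have hzero : (0 : ℝ) ∈ closure (Set.Ioo 0 L) := by
    rw [closure_Ioo (hh.1.trans hh.2).ne]
    exact ⟨le_rfl, (hh.1.trans hh.2).le⟩
  calc N h = N 0 := (hconst.closure hcont continuous_const hzero).symm
    _ = 2 * ∫ s in (0 : ℝ)..L, k s s := by
      simp only [hN, add_zero, ← two_mul, intervalIntegral.integral_const_mul]

theorem integral_integral_eq (hk : IsDoubleLayerKernel z k) (hz : ContDiff ℝ 1 z)
    (hz' : ∀ t, deriv z t ≠ 0) (hL : 0 ≤ L) (hper : Function.Periodic z L)
    (hinj : Set.InjOn z (Set.Ico 0 L)) :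
    ∫ s in (0 : ℝ)..L, ∫ t in (0 : ℝ)..L, k s t = L * ∫ s in (0 : ℝ)..L, k s s := by
  have hswap : Continuous (fun s t => k t s).uncurry := hk.continuous.comp continuous_swap
  have hsum : Continuous (fun s t => k s t + k t s).uncurry := hk.continuous.add hswap
  have hperiodic : ∀ s, Function.Periodic (fun t => k s t + k t s) L := fun s =>
    (hk.periodic_right hz' hper s).add (hk.periodic_left hz' hper s)
  have htwice : 2 * ∫ s in (0 : ℝ)..L, ∫ t in (0 : ℝ)..L, k s t =
      2 * (L * ∫ s in (0 : ℝ)..L, k s s) :=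
    calc 2 * ∫ s in (0 : ℝ)..L, ∫ t in (0 : ℝ)..L, k s t
        = ∫ s in (0 : ℝ)..L, ∫ t in (0 : ℝ)..L, (k s t + k t s) := by
          rw [intervalIntegral_intervalIntegral_add hk.continuous hswap,
            intervalIntegral_intervalIntegral_swap_of_continuous hswap, two_mul]
      _ = ∫ h in (0 : ℝ)..L, ∫ s in (0 : ℝ)..L, (k s (s + h) + k (s + h) s) :=
          (integral_integral_shear hsum hperiodic).symm
      _ = ∫ _ in (0 : ℝ)..L, 2 * ∫ s in (0 : ℝ)..L, k s s :=
          intervalIntegral.integral_congr_Ioo_of_le hL fun h hh =>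
            hk.integral_add_swap_eq hz hper hinj hh
      _ = 2 * (L * ∫ s in (0 : ℝ)..L, k s s) := by
          rw [intervalIntegral.integral_const, smul_eq_mul, sub_zero]
          ring
  exact mul_left_cancel₀ two_ne_zero htwice

theorem im_deriv_mul_conj_eq (hk : IsDoubleLayerKernel z k) (s t : ℝ) :
    (deriv z t * conj (z t - z s)).im = -k s t * ‖z t - z s‖ ^ 2 := by
  by_cases hne : z s = z t
  · simp [hne]
  have hsub : z t - z s ≠ 0 := sub_ne_zero.2 (Ne.symm hne)
  have hdiv : deriv z t * conj (z t - z s) =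
      ((‖z t - z s‖ ^ 2 : ℝ) : ℂ) * (deriv z t / (z t - z s)) := by
    rw [Complex.ofReal_pow, ← Complex.mul_conj']
    field_simp
  rw [hk.eq_of_ne s t hne, hdiv, Complex.im_ofReal_mul]
  ring

theorem exists_norm_sub_eq_of_const (hk : IsDoubleLayerKernel z k) (hz : Differentiable ℝ z)
    (hunit : ∀ t, ‖deriv z t‖ = 1) {a b t κ : ℝ} (hab : a < b) (hclosed : z a = z b)
    (hκ : ∀ s, k s t = κ) : ∃ c : ℂ, ∃ R > 0, ∀ s, ‖z s - c‖ = R := by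
  have hne : ∀ s, deriv z s ≠ 0 := fun s => norm_ne_zero_iff.1 (by simp [hunit s])
  have hchord : ∀ s, (deriv z t * conj (z t - z s)).im = -κ * ‖z t - z s‖ ^ 2 := fun s => by
    rw [hk.im_deriv_mul_conj_eq, hκ]
  have hκ0 : κ ≠ 0 := by
    rintro rfl
    obtain ⟨s, hs⟩ := exists_im_mul_conj_sub_ne_zero hz hne hab hclosed (hne t) (z t)
    exact hs (by simpa using hchord s)
  refine ⟨z t - Complex.I * deriv z t / (2 * κ), 1 / (2 * |κ|), by positivity, fun s => ?_⟩
  rw [← norm_sub_I_mul_div_eq (hunit t) hκ0 (hchord s), ← norm_neg]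
  congr 1
  ring

theorem eq_neg_half_im_div (hk : IsDoubleLayerKernel z k) (hz : ContDiff ℝ 1 z)
    (hne : ∀ t, deriv z t ≠ 0) {c : ℂ} {R : ℝ} (hR : 0 < R) (hcircle : ∀ s, ‖z s - c‖ = R)
    (s t : ℝ) : k s t = -(deriv z t / (z t - c)).im / 2 := by
  have hc : ∀ t, z t - c ≠ 0 := fun t => norm_pos_iff.1 (by rw [hcircle]; exact hR)
  have hdiv : Continuous fun t => deriv z t / (z t - c) :=
    (hz.continuous_deriv le_rfl).div (hz.continuous.sub continuous_const) hc
  have hcont : Continuous fun t => -(deriv z t / (z t - c)).im / 2 :=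
    (Complex.continuous_im.comp hdiv).neg.div_const 2
  refine hk.ext_right hne hcont (fun t hst => ?_) t
  have hsplit : deriv z t / (z t - z s) =
      deriv z t / (z t - c) * ((z t - c) / ((z t - c) - (z s - c))) := by
    rw [sub_sub_sub_cancel_right, div_mul_div_cancel₀ (hc t)]
  have hre := re_div_sub_eq_half ((hcircle t).trans (hcircle s).symm)
    (fun h => hst (sub_left_injective h).symm)
  rw [hk.eq_of_ne s t hst, hsplit, Complex.mul_im, hre,
    re_deriv_div_sub_eq_zero (hz.differentiable one_ne_zero) hcircle]
  ring

theorem sq_eq_of_norm_sub_eq (hk : IsDoubleLayerKernel z k) (hz : ContDiff ℝ 1 z)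
    (hunit : ∀ t, ‖deriv z t‖ = 1) {c : ℂ} {R : ℝ} (hR : 0 < R) (hcircle : ∀ s, ‖z s - c‖ = R)
    (s t : ℝ) : k s t ^ 2 = (1 / (2 * R)) ^ 2 := by
  have hnorm : ‖deriv z t / (z t - c)‖ = 1 / R := by rw [norm_div, hunit, hcircle]
  have him : (deriv z t / (z t - c)).im ^ 2 = (1 / R) ^ 2 := by
    rw [← hnorm, ← Complex.normSq_eq_norm_sq, Complex.normSq_apply,
      re_deriv_div_sub_eq_zero (hz.differentiable one_ne_zero) hcircle]
    ring
  rw [hk.eq_neg_half_im_div hz (fun t => norm_ne_zero_iff.1 (by simp [hunit t])) hR hcircle,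
    div_pow, neg_sq, him]
  ring

theorem integral_integral_sq_eq_iff_circle (hk : IsDoubleLayerKernel z k) (hz : ContDiff ℝ 1 z)
    (hunit : ∀ t, ‖deriv z t‖ = 1) (hL : 0 < L) (hper : Function.Periodic z L)
    (hinj : Set.InjOn z (Set.Ico 0 L)) :
    ∫ s in (0 : ℝ)..L, ∫ t in (0 : ℝ)..L, k s t ^ 2 = (∫ t in (0 : ℝ)..L, k t t) ^ 2 ↔
      ∃ c : ℂ, ∃ R > 0, ∀ s, ‖z s - c‖ = R := by
  have hne : ∀ t, deriv z t ≠ 0 := fun t => norm_ne_zero_iff.1 (by simp [hunit t])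
  constructor
  · intro htrace
    have htotal := hk.integral_integral_eq hz hne hL.le hper hinj
    obtain ⟨κ, hκ⟩ : ∃ κ, ∀ s ∈ Set.Icc 0 L, k s 0 = κ := ⟨_, fun s hs =>
      eq_average_of_sq_integral_eq hk.continuous hL hL (by rw [htotal, htrace]; ring) hs
        (Set.left_mem_Icc.2 hL.le)⟩
    refine hk.exists_norm_sub_eq_of_const (t := 0) (κ := κ) (hz.differentiable one_ne_zero) hunit hL
      hper.eq.symm fun s => ?_
    obtain ⟨r, hr, hsr⟩ := (hk.periodic_left hne hper 0).exists_mem_Ico₀ hL s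
    exact hsr.trans (hκ r (Set.Ico_subset_Icc_self hr))
  · rintro ⟨c, R, hR, hcircle⟩
    obtain ⟨m, hm⟩ := exists_const_of_sq_eq hk.continuous fun p : ℝ × ℝ =>
      hk.sq_eq_of_norm_sub_eq hz hunit hR hcircle p.1 p.2
    have hkm : ∀ s t, k s t = m := fun s t => hm (s, t)
    simp only [hkm, intervalIntegral.integral_const, smul_eq_mul]
    ring

end IsDoubleLayerKernel

/-- The isometry `(x, y) ↦ x + i y`, which turns curves in the Euclidean plane into complex-valued
ones. -/
noncomputable def planeEquivComplex : EuclideanSpace ℝ (Fin 2) ≃ₗᵢ[ℝ] ℂ :=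
  Complex.orthonormalBasisOneI.repr.symm

theorem planeEquivComplex_apply (x : EuclideanSpace ℝ (Fin 2)) :
    planeEquivComplex x = x 0 + x 1 * Complex.I :=
  Complex.orthonormalBasisOneI_repr_symm_apply x

theorem deriv_planeEquivComplex_comp {q : ℝ → EuclideanSpace ℝ (Fin 2)} (hq : Differentiable ℝ q)
    (t : ℝ) : deriv (planeEquivComplex ∘ q) t = planeEquivComplex (deriv q t) :=
  (planeEquivComplex.toContinuousLinearEquiv.hasFDerivAt.comp_hasDerivAt t
    (hq t).hasDerivAt).deriv

theorem dlKernel_eq_neg_im {q : ℝ → EuclideanSpace ℝ (Fin 2)} (hq : Differentiable ℝ q) (s t : ℝ) :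
    dlKernel q s t = -(deriv (planeEquivComplex ∘ q) t /
      ((planeEquivComplex ∘ q) t - (planeEquivComplex ∘ q) s)).im := by
  have hnorm : ‖q s - q t‖ ^ 2 = Complex.normSq (planeEquivComplex (q t - q s)) := by
    rw [Complex.normSq_eq_norm_sq, planeEquivComplex.norm_map, norm_sub_rev]
  rw [deriv_planeEquivComplex_comp hq, Function.comp_apply, Function.comp_apply, ← map_sub,
    Complex.div_im, ← hnorm, dlKernel, ← sub_div, ← neg_div]
  congr 1
  simp [planeEquivComplex_apply]
  ring

theorem integral_dlDiag (q : ℝ → EuclideanSpace ℝ (Fin 2)) (a b : ℝ) :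
    ∫ t in a..b, dlDiag q t = -(1 / 2) * ∫ t in a..b,
      (deriv (deriv q) t 1 * deriv q t 0 - deriv (deriv q) t 0 * deriv q t 1) := by
  rw [← intervalIntegral.integral_const_mul]
  congr! 2
  rw [dlDiag]
  ring

theorem double_layer_trace_eq_one_iff_circle_general
    (L : ℝ) (hL : 0 < L)
    (q : ℝ → EuclideanSpace ℝ (Fin 2))
    (hq : ContDiff ℝ 1 q)
    (hper : ∀ s, q (s + L) = q s)
    (hunit : ∀ s, ‖deriv q s‖ = 1)
    (hinj : Set.InjOn q (Set.Ico 0 L))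
    (ktil : ℝ → ℝ → ℝ)
    (hcont : Continuous (fun p : ℝ × ℝ => ktil p.1 p.2))
    (hoff : ∀ s t, q s ≠ q t → ktil s t = dlKernel q s t) :
    (∫ s in (0 : ℝ)..L, ∫ t in (0 : ℝ)..L, (ktil s t) ^ 2) = (∫ t in (0 : ℝ)..L, ktil t t) ^ 2
      ↔ ∃ c : EuclideanSpace ℝ (Fin 2), ∃ R : ℝ, 0 < R ∧ ∀ s : ℝ, ‖q s - c‖ = R := by
  have hdiff : Differentiable ℝ q := hq.differentiable one_ne_zero
  have hk : IsDoubleLayerKernel (planeEquivComplex ∘ q) ktil :=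
    ⟨hcont, fun s t hne => (hoff s t (ne_of_apply_ne _ hne)).trans (dlKernel_eq_neg_im hdiff s t)⟩
  rw [hk.integral_integral_sq_eq_iff_circle (planeEquivComplex.contDiff.comp hq)
    (fun t => by rw [deriv_planeEquivComplex_comp hdiff, planeEquivComplex.norm_map, hunit]) hL
    (fun s => congrArg planeEquivComplex (hper s)) (planeEquivComplex.injective.comp_injOn hinj),
    planeEquivComplex.surjective.exists]
  simp only [Function.comp_apply, ← map_sub, planeEquivComplex.norm_map, gt_iff_lt]

/-- The trace of `K*K` equals 1 iff the boundary curve is a circle. -/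
theorem double_layer_trace_eq_one_iff_circle
    (L : ℝ) (hL : 0 < L)
    (q : ℝ → EuclideanSpace ℝ (Fin 2))
    (hq : ContDiff ℝ 2 q)
    (hper : ∀ s, q (s + L) = q s)
    (hunit : ∀ s, ‖deriv q s‖ = 1)
    (hinj : Set.InjOn q (Set.Ico 0 L))
    (horient : (∫ t in (0:ℝ)..L,
      (deriv (deriv q) t 1 * deriv q t 0 - deriv (deriv q) t 0 * deriv q t 1)) = 2 * π)
    (ktil : ℝ → ℝ → ℝ)
    (hcont : Continuous (fun p : ℝ × ℝ => ktil p.1 p.2))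
    (hoff : ∀ s t, q s ≠ q t → ktil s t = dlKernel q s t)
    (hdiag : ∀ t, ktil t t = dlDiag q t) :
    (((1 / π ^ 2) * ∫ s in (0:ℝ)..L, ∫ t in (0:ℝ)..L, (ktil s t) ^ 2) = 1)
      ↔ ∃ c : EuclideanSpace ℝ (Fin 2), ∃ R : ℝ, 0 < R ∧ ∀ s : ℝ, ‖q s - c‖ = R := by
  have hcurvature : ∫ t in (0:ℝ)..L, ktil t t = -π := by
    simp only [hdiag, integral_dlDiag, horient]
    ring
  rw [← double_layer_trace_eq_one_iff_circle_general L hL q (hq.of_le one_le_two) hper hunit hinj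
    ktil hcont hoff, hcurvature, neg_sq, one_div_mul_eq_div, div_eq_one_iff_eq (by positivity)]
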